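/- Assume the loss has the form ℓ(w,x,y) = ℓ(f_w(x),y) with values in [0,1]. Then the super-sample class-generalization error of class y satisfies |gen_y| ≤ E_{Z_{[2n]}}[(1/n^y) Σ_{i=1}^n sqrt(2·max(𝟙{Y_i^-=y}, 𝟙{Y_i^+=y})·I_{Z_{[2n]}}(L_i^±;U_i))]. -/

import Mathlib

open MeasureTheory ProbabilityTheory
open scoped ENNReal

noncomputable section

open Classical in
/-- Kullback–Leibler divergence: `∞` unless `μ ≪ ν` and the log-likelihood ratio is
`μ`-integrable. -/
def KL {α : Type*} [MeasurableSpace α] (μ ν : Measure α) : ℝ≥0∞ :=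
  if μ ≪ ν ∧ Integrable (llr μ ν) μ then ENNReal.ofReal (∫ x, llr μ ν x ∂μ) else ∞

/-- Fair coin measure on `Bool` (the law of a uniform `{−1,+1}` selector, `true ↔ +1`). -/
def coin : Measure Bool :=
  (2 : ℝ≥0∞)⁻¹ • Measure.dirac true + (2 : ℝ≥0∞)⁻¹ • Measure.dirac false

/-- Disintegrated conditional mutual information `I_z(A;B)` given `Z = z`, defined through
regular conditional distributions: `KL(P_{A,B|Z=z} ‖ P_{A|Z=z} ⊗ P_{B|Z=z})`. -/
def dCMI {Ω γ α β : Type*} [MeasurableSpace Ω] [MeasurableSpace γ]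
    [MeasurableSpace α] [StandardBorelSpace α] [Nonempty α]
    [MeasurableSpace β] [StandardBorelSpace β] [Nonempty β]
    (μ : Measure Ω) [IsFiniteMeasure μ]
    (A : Ω → α) (B : Ω → β) (Z : Ω → γ) (z : γ) : ℝ≥0∞ :=
  KL (condDistrib (fun ω => (A ω, B ω)) Z μ z)
    ((condDistrib A Z μ z).prod (condDistrib B Z μ z))

/-- The super-sample entry selected by `u`, i.e. `z^{u}` (the training sample):
`zz = (z⁻, z⁺)` and `u = true` means `+1`. -/
def trainSel {𝒵 : Type*} (zz : 𝒵 × 𝒵) (u : Bool) : 𝒵 := if u then zz.2 else zz.1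

/-- The super-sample entry not selected by `u`, i.e. `z^{−u}` (the test sample). -/
def testSel {𝒵 : Type*} (zz : 𝒵 × 𝒵) (u : Bool) : 𝒵 := if u then zz.1 else zz.2

/-!
Given the super-sample `z`, the difference between test and training loss at index `i` is
`± (φ⁻ - φ⁺)`, where the sign is the selector `U i` and `φ⁻`, `φ⁺` are the two losses, each
multiplied by the indicator that its sample has label `y`. Under the product of the conditional laws
of the loss pair and the selector, this signed difference is centred and bounded by the maximum `b`
of the two indicators, hence sub-Gaussian with parameter `b ^ 2 = b` by Hoeffding's lemma. The
Donsker–Varadhan inequality then bounds its mean under the joint conditional law by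
`√(2 b I_z(L_i^±; U_i))`; it remains to average over `z`.
-/

open scoped NNReal

theorem sum_lintegral_le_lintegral_sum {α ι : Type*} [MeasurableSpace α] {μ : Measure α}
    (s : Finset ι) (f : ι → α → ℝ≥0∞) :
    ∑ i ∈ s, ∫⁻ x, f i x ∂μ ≤ ∫⁻ x, ∑ i ∈ s, f i x ∂μ := by
  classical
  induction s using Finset.induction_on with
  | empty => simp
  | insert i s hi ih =>
    simp only [Finset.sum_insert hi]
    exact (add_le_add_right ih _).trans (le_lintegral_add _ _)

theorem ofReal_abs_integral_mul_sum_le {Ω γ ι : Type*} [MeasurableSpace Ω] [MeasurableSpace γ]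
    {μ : Measure Ω} {ν : Measure γ} (s : Finset ι) {D : ι → Ω → ℝ} {F : ι → γ → ℝ≥0∞} {c : ℝ}
    (hc : 0 ≤ c) (hD : ∀ i ∈ s, Integrable (D i) μ)
    (hDF : ∀ i ∈ s, ENNReal.ofReal |∫ ω, D i ω ∂μ| ≤ ∫⁻ z, F i z ∂ν) :
    ENNReal.ofReal |∫ ω, c * ∑ i ∈ s, D i ω ∂μ| ≤
      ∫⁻ z, ENNReal.ofReal c * ∑ i ∈ s, F i z ∂ν := by
  simp only [← Real.enorm_eq_ofReal_abs] at hDF ⊢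
  calc ‖∫ ω, c * ∑ i ∈ s, D i ω ∂μ‖ₑ
      = ENNReal.ofReal c * ‖∑ i ∈ s, ∫ ω, D i ω ∂μ‖ₑ := by
        rw [integral_const_mul, integral_finsetSum s hD, enorm_mul, Real.enorm_of_nonneg hc]
    _ ≤ ENNReal.ofReal c * ∑ i ∈ s, ∫⁻ z, F i z ∂ν := by
        gcongr
        exact (enorm_sum_le _ _).trans (Finset.sum_le_sum hDF)
    _ ≤ ENNReal.ofReal c * ∫⁻ z, ∑ i ∈ s, F i z ∂ν := by
        gcongr
        exact sum_lintegral_le_lintegral_sum s F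
    _ = ∫⁻ z, ENNReal.ofReal c * ∑ i ∈ s, F i z ∂ν :=
        (lintegral_const_mul' _ _ ENNReal.ofReal_ne_top).symm

section Divergence

variable {α : Type*} [MeasurableSpace α] {P Q : Measure α} [IsProbabilityMeasure P]
  [IsProbabilityMeasure Q] {g : α → ℝ}

theorem integral_le_integral_llr_add_log_integral_exp (hPQ : P ≪ Q)
    (hllr : Integrable (llr P Q) P) (hgP : Integrable g P)
    (hgQ : Integrable (fun x => Real.exp (g x)) Q) :
    ∫ x, g x ∂P ≤ ∫ x, llr P Q x ∂P + Real.log (∫ x, Real.exp (g x) ∂Q) := by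
  have : IsProbabilityMeasure (Q.tilted g) := isProbabilityMeasure_tilted hgQ
  -- Gibbs' inequality against the exponential tilt of `Q` by `g`
  have gibbs := InformationTheory.integral_llr_add_mul_log_nonneg
    (hPQ.trans (absolutelyContinuous_tilted hgQ)) (integrable_llr_tilted_right hPQ hgP hllr hgQ)
  simp only [probReal_univ, Real.log_one, mul_zero, add_zero] at gibbs
  linarith [integral_llr_tilted_right hPQ hgP hgQ hllr]

theorem sq_integral_le_of_hasSubgaussianMGF {c : ℝ≥0} (hPQ : P ≪ Q)
    (hllr : Integrable (llr P Q) P) (hgP : Integrable g P) (hgQ : HasSubgaussianMGF g c Q) :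
    (∫ x, g x ∂P) ^ 2 ≤ 2 * c * ∫ x, llr P Q x ∂P := by
  have quadratic_nonneg (t : ℝ) :
      0 ≤ (c / 2 : ℝ) * (t * t) + -(∫ x, g x ∂P) * t + ∫ x, llr P Q x ∂P := by
    have variational := integral_le_integral_llr_add_log_integral_exp hPQ hllr (hgP.const_mul t)
      (hgQ.integrable_exp_mul t)
    rw [integral_const_mul] at variational
    have cgf_le : Real.log (∫ x, Real.exp (t * g x) ∂Q) ≤ c * t ^ 2 / 2 := hgQ.cgf_le t
    linarith
  have discrim_nonpos := discrim_le_zero quadratic_nonneg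
  rw [discrim] at discrim_nonpos
  linarith

theorem ofReal_abs_integral_le_of_hasSubgaussianMGF {c : ℝ≥0} (hc : c ≠ 0)
    (hgP : Integrable g P) (hgQ : HasSubgaussianMGF g c Q) :
    ENNReal.ofReal |∫ x, g x ∂P| ≤ (2 * c * KL P Q) ^ (1 / 2 : ℝ) := by
  rw [KL]
  split_ifs with hPQ
  · have sq_le := sq_integral_le_of_hasSubgaussianMGF hPQ.1 hPQ.2 hgP hgQ
    rw [← ENNReal.ofReal_ofNat 2, ← ENNReal.ofReal_coe_nnreal, ← ENNReal.ofReal_mul zero_le_two,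
      ← ENNReal.ofReal_mul (by positivity),
      ENNReal.ofReal_rpow_of_nonneg ((sq_nonneg _).trans sq_le) one_half_pos.le,
      ← Real.sqrt_eq_rpow]
    exact ENNReal.ofReal_le_ofReal (Real.abs_le_sqrt sq_le)
  · simp [ENNReal.mul_top, hc]

end Divergence

section Coin

instance : IsProbabilityMeasure coin where
  measure_univ := by simp [coin, ENNReal.inv_two_add_inv_two]

/-- The selector as a number in `{−1, +1}`. -/
def selSign (u : Bool) : ℝ := if u then 1 else -1

@[fun_prop]
theorem measurable_selSign : Measurable selSign :=
  measurable_of_countable _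

theorem abs_selSign (u : Bool) : |selSign u| = 1 := by
  cases u <;> simp [selSign]

theorem integrable_selSign_mul {Ω : Type*} [MeasurableSpace Ω] {μ : Measure Ω} {U : Ω → Bool}
    {f : Ω → ℝ} (hU : AEMeasurable U μ) (hf : Integrable f μ) :
    Integrable (fun ω => selSign (U ω) * f ω) μ :=
  hf.bdd_mul (c := 1) (measurable_selSign.comp_aemeasurable hU).aestronglyMeasurable
    (.of_forall fun ω => (abs_selSign (U ω)).le)

theorem integral_selSign_coin : ∫ u, selSign u ∂coin = 0 := by
  rw [integral_fintype .of_finite]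
  simp [coin, selSign, measureReal_def]

theorem sub_testSel_trainSel {𝒵 : Type*} (φ : 𝒵 → ℝ) (zz : 𝒵 × 𝒵) (u : Bool) :
    φ (testSel zz u) - φ (trainSel zz u) = selSign u * (φ zz.1 - φ zz.2) := by
  cases u <;> simp [testSel, trainSel, selSign]

theorem hasSubgaussianMGF_selSign_mul {α : Type*} [MeasurableSpace α] {ν : Measure α}
    [IsProbabilityMeasure ν] {h : α → ℝ} (hh : AEMeasurable h ν) {b : ℝ≥0}
    (hb : ∀ᵐ a ∂ν, |h a| ≤ b) :
    HasSubgaussianMGF (fun p : α × Bool => selSign p.2 * h p.1) (b ^ 2) (ν.prod coin) := by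
  have centred : ∫ p : α × Bool, selSign p.2 * h p.1 ∂ν.prod coin = 0 := by
    simp_rw [mul_comm (selSign _)]
    rw [integral_prod_mul, integral_selSign_coin, mul_zero]
  have bounded : ∀ᵐ p ∂ν.prod coin, selSign p.2 * h p.1 ∈ Set.Icc (-b : ℝ) b := by
    filter_upwards [Measure.quasiMeasurePreserving_fst.ae hb] with p hp
    rwa [Set.mem_Icc, ← abs_le, abs_mul, abs_selSign, one_mul]
  have hoeffding := hasSubgaussianMGF_of_mem_Icc_of_integral_eq_zero
    (by fun_prop) bounded centred
  convert hoeffding using 2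
  rw [sub_neg_eq_add, ← two_mul, nnnorm_mul]
  simp

theorem ofReal_abs_integral_selSign_mul_le_KL {α : Type*} [MeasurableSpace α] {ν : Measure α}
    [IsProbabilityMeasure ν] {P : Measure (α × Bool)} [IsProbabilityMeasure P] {h : α → ℝ}
    (hh : Measurable h) {b : ℝ≥0} (hν : ∀ᵐ a ∂ν, |h a| ≤ b) (hP : ∀ᵐ p ∂P, |h p.1| ≤ b) :
    ENNReal.ofReal |∫ p, selSign p.2 * h p.1 ∂P| ≤
      (2 * b ^ 2 * KL P (ν.prod coin)) ^ (1 / 2 : ℝ) := by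
  -- `2 * 0 * ∞ = 0` on the right, so `b = 0` is treated apart.
  obtain rfl | hb := eq_or_ne b 0
  · have integral_zero : ∫ p, selSign p.2 * h p.1 ∂P = 0 :=
      integral_eq_zero_of_ae (hP.mono fun p hp => by simpa using Or.inr hp)
    simp [integral_zero]
  · have bounded : ∀ᵐ p ∂P, ‖selSign p.2 * h p.1‖ ≤ b :=
      hP.mono fun p hp => by rwa [Real.norm_eq_abs, abs_mul, abs_selSign, one_mul]
    rw [← ENNReal.coe_pow]
    exact ofReal_abs_integral_le_of_hasSubgaussianMGF (pow_ne_zero 2 hb)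
      (.of_bound (by fun_prop) b bounded) (hasSubgaussianMGF_selSign_mul hh.aemeasurable hν)

end Coin

section Disintegration

variable {Ω α γ : Type*} [MeasurableSpace Ω] [MeasurableSpace α] [StandardBorelSpace α]
  [Nonempty α] [MeasurableSpace γ] {μ : Measure Ω} {A : Ω → α} {Z : Ω → γ} {U : Ω → Bool}

theorem ae_ae_condDistrib_of_ae [IsFiniteMeasure μ] (hA : AEMeasurable A μ)
    (hZ : AEMeasurable Z μ) {p : γ × α → Prop} (hp : MeasurableSet {x | p x})
    (h : ∀ᵐ ω ∂μ, p (Z ω, A ω)) :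
    ∀ᵐ z ∂μ.map Z, ∀ᵐ a ∂condDistrib A Z μ z, p (z, a) := by
  refine Measure.ae_ae_of_ae_compProd ?_
  rwa [compProd_map_condDistrib hA, ae_map_iff (hZ.prodMk hA) hp]

theorem hasCondDistrib_const_of_map_eq_prod {δ : Type*} [MeasurableSpace δ] {B : Ω → δ}
    {M : Measure γ} {N : Measure δ} [SFinite M] [IsProbabilityMeasure N] (hZ : AEMeasurable Z μ)
    (hB : AEMeasurable B μ) (hlaw : μ.map (fun ω => (Z ω, B ω)) = M.prod N) :
    HasCondDistrib B Z (Kernel.const γ N) μ where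
  map_eq := by
    have map_Z : μ.map Z = M := by
      rw [← Measure.fst_map_prodMk₀ hB, hlaw, Measure.fst_prod]
    rw [hlaw, map_Z, Measure.compProd_const]

theorem hasCondDistrib_eval_of_map_eq_prod_pi {ι : Type*} [Fintype ι] {δ : ι → Type*}
    [∀ i, MeasurableSpace (δ i)] [SFinite μ] {B : Ω → ∀ i, δ i} {M : Measure γ} [SFinite M]
    {N : ∀ i, Measure (δ i)} [∀ i, IsProbabilityMeasure (N i)] (hZ : AEMeasurable Z μ)
    (hB : AEMeasurable B μ) (hlaw : μ.map (fun ω => (Z ω, B ω)) = M.prod (Measure.pi N)) (i : ι) :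
    HasCondDistrib (fun ω => B ω i) Z (Kernel.const γ (N i)) μ := by
  rw [← (measurePreserving_eval N i).map_eq, ← Kernel.map_const _ (measurable_pi_apply i)]
  exact (hasCondDistrib_const_of_map_eq_prod hZ hB hlaw).comp_left (measurable_pi_apply i)

theorem ae_ofReal_abs_integral_condDistrib_le [IsFiniteMeasure μ]
    (hU : HasCondDistrib U Z (Kernel.const γ coin) μ) (hA : AEMeasurable A μ) {h : γ × α → ℝ}
    (hh : Measurable h) {b : γ → ℝ≥0} (hb : Measurable b)
    (hhb : ∀ᵐ ω ∂μ, |h (Z ω, A ω)| ≤ b (Z ω)) :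
    ∀ᵐ z ∂μ.map Z,
      ENNReal.ofReal |∫ p, selSign p.2 * h (z, p.1) ∂condDistrib (fun ω => (A ω, U ω)) Z μ z| ≤
        (2 * b z ^ 2 * dCMI μ A U Z z) ^ (1 / 2 : ℝ) := by
  have hZ := hU.aemeasurable_fst
  have hAU := hA.prodMk hU.aemeasurable_snd
  have condDistrib_U : condDistrib U Z μ =ᵐ[μ.map Z] Kernel.const γ coin :=
    condDistrib_ae_eq_of_measure_eq_compProd Z hU.aemeasurable_snd hU.map_eq
  filter_upwards [condDistrib_U,
    ae_ae_condDistrib_of_ae hA hZ (p := fun x => |h x| ≤ b x.1)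
      (measurableSet_le (by fun_prop) (by fun_prop)) hhb,
    ae_ae_condDistrib_of_ae hAU hZ (p := fun x => |h (x.1, x.2.1)| ≤ b x.1)
      (measurableSet_le (by fun_prop) (by fun_prop)) hhb] with z U_uniform bound_A bound_AU
  rw [dCMI, U_uniform, Kernel.const_apply]
  exact ofReal_abs_integral_selSign_mul_le_KL (by fun_prop) bound_A bound_AU

theorem ofReal_abs_integral_selSign_mul_le [IsFiniteMeasure μ]
    (hU : HasCondDistrib U Z (Kernel.const γ coin) μ) (hA : AEMeasurable A μ) {h : γ × α → ℝ}
    (hh : Measurable h) (hint : Integrable (fun ω => h (Z ω, A ω)) μ) {b : γ → ℝ≥0}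
    (hb : Measurable b) (hhb : ∀ᵐ ω ∂μ, |h (Z ω, A ω)| ≤ b (Z ω)) :
    ENNReal.ofReal |∫ ω, selSign (U ω) * h (Z ω, A ω) ∂μ| ≤
      ∫⁻ z, (2 * b z ^ 2 * dCMI μ A U Z z) ^ (1 / 2 : ℝ) ∂μ.map Z := by
  let g : γ × α × Bool → ℝ := fun x => selSign x.2.2 * h (x.1, x.2.1)
  have hAU := hA.prodMk hU.aemeasurable_snd
  have hg : Measurable g := by fun_prop
  have integrable_g : Integrable g (μ.map Z ⊗ₘ condDistrib (fun ω => (A ω, U ω)) Z μ) := by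
    rw [compProd_map_condDistrib hAU,
      integrable_map_measure hg.aestronglyMeasurable (hU.aemeasurable_fst.prodMk hAU)]
    exact integrable_selSign_mul hU.aemeasurable_snd hint
  calc ENNReal.ofReal |∫ ω, selSign (U ω) * h (Z ω, A ω) ∂μ|
      = ‖∫ z, ∫ p, g (z, p) ∂condDistrib (fun ω => (A ω, U ω)) Z μ z ∂μ.map Z‖ₑ := by
        rw [← Measure.integral_compProd integrable_g, compProd_map_condDistrib hAU,
          integral_map (hU.aemeasurable_fst.prodMk hAU) hg.aestronglyMeasurable,
          Real.enorm_eq_ofReal_abs]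
    _ ≤ ∫⁻ z, ‖∫ p, g (z, p) ∂condDistrib (fun ω => (A ω, U ω)) Z μ z‖ₑ ∂μ.map Z :=
        enorm_integral_le_lintegral_enorm _
    _ ≤ ∫⁻ z, (2 * b z ^ 2 * dCMI μ A U Z z) ^ (1 / 2 : ℝ) ∂μ.map Z := by
        simp only [Real.enorm_eq_ofReal_abs]
        exact lintegral_mono_ae (ae_ofReal_abs_integral_condDistrib_le hU hA hh hb hhb)

end Disintegration

section Mask

variable {𝒵 : Type*} (s : 𝒵 → Prop) [DecidablePred s]

/-- The loss `L.1` of `zz.1` minus the loss `L.2` of `zz.2`, where the loss of a sample violating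
`s` counts as `0`: up to the sign of the selector, the contribution of a super-sample pair to the
error restricted to `s`. -/
def maskedDiff (zz : 𝒵 × 𝒵) (L : ℝ × ℝ) : ℝ :=
  (if s zz.1 then L.1 else 0) - if s zz.2 then L.2 else 0

/-- The indicator `max (𝟙 (s z⁻)) (𝟙 (s z⁺))` that a super-sample pair meets `s`. -/
def pairMask (zz : 𝒵 × 𝒵) : ℝ≥0 := if s zz.1 ∨ s zz.2 then 1 else 0

theorem coe_pairMask_sq (zz : 𝒵 × 𝒵) :
    (pairMask s zz : ℝ≥0∞) ^ 2 =
      max (if s zz.1 then (1 : ℝ≥0∞) else 0) (if s zz.2 then (1 : ℝ≥0∞) else 0) := by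
  by_cases h₁ : s zz.1 <;> by_cases h₂ : s zz.2 <;> simp [pairMask, h₁, h₂]

theorem pairMask_le_one (zz : 𝒵 × 𝒵) : (pairMask s zz : ℝ) ≤ 1 := by
  unfold pairMask
  split_ifs <;> simp

theorem abs_maskedDiff_le (zz : 𝒵 × 𝒵) {L : ℝ × ℝ}
    (hL : L ∈ Set.Icc (0 : ℝ) 1 ×ˢ Set.Icc (0 : ℝ) 1) : |maskedDiff s zz L| ≤ pairMask s zz := by
  obtain ⟨⟨h₁_nonneg, h₁_le⟩, h₂_nonneg, h₂_le⟩ := hL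
  by_cases hs₁ : s zz.1 <;> by_cases hs₂ : s zz.2 <;>
    simp only [maskedDiff, pairMask, hs₁, hs₂, or_self, or_true, or_false, if_true, if_false,
      NNReal.coe_one, NNReal.coe_zero, abs_le] <;>
    constructor <;> linarith

variable {s} [MeasurableSpace 𝒵]

theorem measurable_maskedDiff (hs : MeasurableSet {z | s z}) :
    Measurable fun x : (𝒵 × 𝒵) × (ℝ × ℝ) => maskedDiff s x.1 x.2 :=
  (Measurable.ite (measurable_fst.fst hs) measurable_snd.fst measurable_const).sub
    (Measurable.ite (measurable_fst.snd hs) measurable_snd.snd measurable_const)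

theorem measurable_pairMask (hs : MeasurableSet {z | s z}) : Measurable (pairMask s) :=
  Measurable.ite ((measurable_fst hs).union (measurable_snd hs)) measurable_const measurable_const

variable {Ω γ : Type*} [MeasurableSpace Ω] [MeasurableSpace γ] {μ : Measure Ω} [IsFiniteMeasure μ]
  {L : Ω → ℝ × ℝ}

theorem integrable_maskedDiff (hs : MeasurableSet {z | s z}) {X : Ω → 𝒵 × 𝒵}
    (hX : AEMeasurable X μ) (hL : AEMeasurable L μ)
    (hL01 : ∀ᵐ ω ∂μ, L ω ∈ Set.Icc (0 : ℝ) 1 ×ˢ Set.Icc (0 : ℝ) 1) :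
    Integrable (fun ω => maskedDiff s (X ω) (L ω)) μ := by
  refine .of_bound
    ((measurable_maskedDiff hs).comp_aemeasurable (hX.prodMk hL)).aestronglyMeasurable 1 ?_
  filter_upwards [hL01] with ω hω
  exact (abs_maskedDiff_le s (X ω) hω).trans (pairMask_le_one s (X ω))

theorem ofReal_abs_integral_selSign_mul_maskedDiff_le (hs : MeasurableSet {z | s z})
    {q : γ → 𝒵 × 𝒵} (hq : Measurable q) {Z : Ω → γ} {U : Ω → Bool}
    (hU : HasCondDistrib U Z (Kernel.const γ coin) μ) (hL : AEMeasurable L μ)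
    (hL01 : ∀ᵐ ω ∂μ, L ω ∈ Set.Icc (0 : ℝ) 1 ×ˢ Set.Icc (0 : ℝ) 1) :
    ENNReal.ofReal |∫ ω, selSign (U ω) * maskedDiff s (q (Z ω)) (L ω) ∂μ| ≤
      ∫⁻ z, (2 * max (if s (q z).1 then (1 : ℝ≥0∞) else 0) (if s (q z).2 then (1 : ℝ≥0∞) else 0) *
        dCMI μ L U Z z) ^ (1 / 2 : ℝ) ∂μ.map Z := by
  simp only [← coe_pairMask_sq]
  exact ofReal_abs_integral_selSign_mul_le hU hL
    (h := fun x => maskedDiff s (q x.1) x.2) (b := fun z => pairMask s (q z))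
    ((measurable_maskedDiff hs).comp ((hq.comp measurable_fst).prodMk measurable_snd))
    (integrable_maskedDiff hs (hq.comp_aemeasurable hU.aemeasurable_fst) hL hL01)
    ((measurable_pairMask hs).comp hq) (hL01.mono fun ω hω => abs_maskedDiff_le s (q (Z ω)) hω)

end Mask

theorem class_eCMI_bound_general
    {Ω 𝒲 𝒵 ι : Type*} [MeasurableSpace Ω] [MeasurableSpace 𝒲] [MeasurableSpace 𝒵] [Fintype ι]
    (μ : Measure Ω) [IsFiniteMeasure μ]
    (Z : Ω → ι → 𝒵 × 𝒵) (U : Ω → ι → Bool)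
    (hU : ∀ i, HasCondDistrib (fun ω => U ω i) Z (Kernel.const _ coin) μ)
    (W : Ω → 𝒲) (hW : AEMeasurable W μ)
    (ℓ : 𝒲 → 𝒵 → ℝ) (hℓ : Measurable (Function.uncurry ℓ))
    (hℓ01 : ∀ w z, ℓ w z ∈ Set.Icc (0 : ℝ) 1)
    (s : 𝒵 → Prop) [DecidablePred s] (hs : MeasurableSet {z | s z}) (c : ℝ) (hc : 0 ≤ c) :
    ENNReal.ofReal
        |∫ ω, c * ∑ i, ((if s (testSel (Z ω i) (U ω i)) then
                    ℓ (W ω) (testSel (Z ω i) (U ω i)) else 0) -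
                  (if s (trainSel (Z ω i) (U ω i)) then
                    ℓ (W ω) (trainSel (Z ω i) (U ω i)) else 0)) ∂μ|
      ≤ ∫⁻ z, ENNReal.ofReal c *
            ∑ i, (2 * max (if s (z i).1 then (1 : ℝ≥0∞) else 0)
                          (if s (z i).2 then (1 : ℝ≥0∞) else 0) *
                  dCMI μ (fun ω => (ℓ (W ω) (Z ω i).1, ℓ (W ω) (Z ω i).2))
                    (fun ω => U ω i) Z z) ^ (1 / 2 : ℝ) ∂μ.map Z := by
  have selected i ω := sub_testSel_trainSel (fun z => if s z then ℓ (W ω) z else 0) (Z ω i) (U ω i)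
  have hL i : AEMeasurable (fun ω => (ℓ (W ω) (Z ω i).1, ℓ (W ω) (Z ω i).2)) μ := by
    have hZ := (hU i).aemeasurable_fst
    fun_prop
  have loss_mem i : ∀ᵐ ω ∂μ, (ℓ (W ω) (Z ω i).1, ℓ (W ω) (Z ω i).2) ∈ Set.Icc 0 1 ×ˢ Set.Icc 0 1 :=
    .of_forall fun ω => ⟨hℓ01 _ _, hℓ01 _ _⟩
  simp only [selected]
  exact ofReal_abs_integral_mul_sum_le Finset.univ hc
    (fun i _ => integrable_selSign_mul (hU i).aemeasurable_snd
      (integrable_maskedDiff hs (measurable_pi_apply i |>.comp_aemeasurable (hU i).aemeasurable_fst)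
        (hL i) (loss_mem i)))
    (fun i _ => ofReal_abs_integral_selSign_mul_maskedDiff_le hs (measurable_pi_apply i) (hU i)
      (hL i) (loss_mem i))

/-- **Theorem B.3 (class-e-CMI bound)**: in the super-sample setting with predictions
`f_w(x)` and a bounded loss `ℓ(f_w(x), y) ∈ [0,1]`, the class-generalization error of class
`y` satisfies
`|gen_y| ≤ E_{Z_{[2n]}}[(1/n^y) Σ_i sqrt (2 max(𝟙{Y_i⁻=y},𝟙{Y_i⁺=y}) I_{Z_{[2n]}}(L_i^±;U_i))]`,
where `L_i^± = (ℓ(f_W(X_i⁻),Y_i⁻), ℓ(f_W(X_i⁺),Y_i⁺))` is the loss pair. -/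
theorem class_eCMI_bound
    {Ω 𝒲 𝒳 𝒴 Yhat : Type*}
    [mΩ : MeasurableSpace Ω] [StandardBorelSpace Ω] [Nonempty Ω]
    [MeasurableSpace 𝒲] [StandardBorelSpace 𝒲] [Nonempty 𝒲]
    [MeasurableSpace 𝒳] [StandardBorelSpace 𝒳]
    [MeasurableSpace 𝒴] [Countable 𝒴] [MeasurableSingletonClass 𝒴] [DecidableEq 𝒴]
    [MeasurableSpace Yhat] [StandardBorelSpace Yhat] [Nonempty Yhat]
    (μ : Measure Ω) [IsProbabilityMeasure μ]
    (n : ℕ) (hn : 0 < n)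
    (PZ : Measure (𝒳 × 𝒴)) [IsProbabilityMeasure PZ]
    (Z : Ω → Fin n → (𝒳 × 𝒴) × (𝒳 × 𝒴)) (hZ : Measurable Z)
    (U : Ω → Fin n → Bool) (hU : Measurable U)
    (W : Ω → 𝒲) (hW : Measurable W)
    (hlaw : μ.map (fun ω => (Z ω, U ω)) =
      (Measure.pi fun _ : Fin n => PZ.prod PZ).prod (Measure.pi fun _ : Fin n => coin))
    (hSle : MeasurableSpace.comap (fun ω (i : Fin n) => trainSel (Z ω i) (U ω i))
        inferInstance ≤ mΩ)
    (hMarkov : CondIndepFun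
      (MeasurableSpace.comap (fun ω (i : Fin n) => trainSel (Z ω i) (U ω i)) inferInstance)
      hSle W (fun ω => (Z ω, U ω)) μ)
    -- the model prediction map and the loss on predictions
    (f : 𝒲 → 𝒳 → Yhat) (hf : Measurable fun p : 𝒲 × 𝒳 => f p.1 p.2)
    (ℓ : Yhat → 𝒴 → ℝ) (hℓ : Measurable fun p : Yhat × 𝒴 => ℓ p.1 p.2)
    (hℓ01 : ∀ p y', ℓ p y' ∈ Set.Icc (0 : ℝ) 1)
    (y : 𝒴) (hy : 0 < PZ (Prod.snd ⁻¹' {y})) :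
    ENNReal.ofReal
        |∫ ω, (1 / ((n : ℝ) * (PZ (Prod.snd ⁻¹' {y})).toReal)) *
            ∑ i, ((if (testSel (Z ω i) (U ω i)).2 = y then
                    ℓ (f (W ω) (testSel (Z ω i) (U ω i)).1) (testSel (Z ω i) (U ω i)).2 else 0) -
                  (if (trainSel (Z ω i) (U ω i)).2 = y then
                    ℓ (f (W ω) (trainSel (Z ω i) (U ω i)).1) (trainSel (Z ω i) (U ω i)).2 else 0))
          ∂μ|
      ≤ ∫⁻ z, ENNReal.ofReal (1 / ((n : ℝ) * (PZ (Prod.snd ⁻¹' {y})).toReal)) *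
            ∑ i, (2 * max (if (z i).1.2 = y then (1 : ℝ≥0∞) else 0)
                          (if (z i).2.2 = y then (1 : ℝ≥0∞) else 0) *
                  dCMI μ (fun ω => (ℓ (f (W ω) ((Z ω i).1.1)) ((Z ω i).1.2), ℓ (f (W ω) ((Z ω i).2.1)) ((Z ω i).2.2)))
                    (fun ω => U ω i) Z z) ^ (1 / 2 : ℝ)
          ∂(μ.map Z) := by
  exact class_eCMI_bound_general μ Z U
    (hasCondDistrib_eval_of_map_eq_prod_pi hZ.aemeasurable hU.aemeasurable hlaw) W hW.aemeasurable
    (fun w z => ℓ (f w z.1) z.2) (by fun_prop) (fun w z => hℓ01 (f w z.1) z.2)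
    (fun z => z.2 = y) (measurable_snd (measurableSet_singleton y)) _ (by positivity)
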